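/- Let k ≥ 1 be an integer. If s = 4k or s = -4k+2 (with s ∉ {0,1,2}), then γ̄(ℤ, {1,2,s}) = 2k/(8k-2). If s = 4k+1 or s = -4k+1, then γ̄(ℤ, {1,2,s}) = (k+1)/(4k+2). If s = 4k+2 or s = -4k, then γ̄(ℤ, {1,2,s}) = (k+1)/(4k+3). -/

import Mathlib

open Filter

/-- Lower density of a set of integers. -/
noncomputable def lowerDensity (D : Set ℤ) : ℝ :=
  Filter.liminf (fun n : ℕ =>
    ((D ∩ Set.Icc (-(n : ℤ)) (n : ℤ)).ncard : ℝ) / (2 * (n : ℝ) + 1)) Filter.atTop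

/-- `D` is a dominating set of the integer distance digraph `Γ(ℤ,S)`. -/
def Dominating (S D : Set ℤ) : Prop :=
  ∀ m : ℤ, m ∈ D ∨ ∃ u ∈ D, ∃ s ∈ S, m = u + s

/-- Domination ratio of `Γ(ℤ,S)`. -/
noncomputable def dominationRatio (S : Set ℤ) : ℝ :=
  sInf (lowerDensity '' {D : Set ℤ | Dominating S D})

/-- `D` is an efficient dominating set of `Γ(ℤ,S)`: every integer is dominated
by exactly one element of `D`. -/
def EffDominating (S D : Set ℤ) : Prop :=
  ∀ m : ℤ, ∃! u, u ∈ D ∧ (u = m ∨ m - u ∈ S)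

/-- Increment of `F` at `n`; the indicator of `D` when `F` counts `D`. -/
def jump (F : ℤ → ℤ) (n : ℤ) : ℤ := F (n + 1) - F n

/-- Number of times `n` is dominated, minus one. -/
def excess (s : ℤ) (F : ℤ → ℤ) (n : ℤ) : ℤ :=
  jump F n + jump F (n - 1) + jump F (n - 2) + jump F (n - s) - 1

theorem excess_eq (s : ℤ) (F : ℤ → ℤ) (n : ℤ) :
    excess s F n = jump F n + jump F (n - 1) + jump F (n - 2) + jump F (n - s) - 1 := rfl

/-- `F` is the counting function of a dominating set of `Γ(ℤ,{1,2,s})`. -/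
structure IsCounting (s : ℤ) (F : ℤ → ℤ) : Prop where
  jump_nonneg : ∀ n, 0 ≤ jump F n
  jump_le_one : ∀ n, jump F n ≤ 1
  excess_nonneg : ∀ n, 0 ≤ excess s F n

/-- Cumulative excess. -/
def cumExcess (s : ℤ) (F : ℤ → ℤ) (n : ℤ) : ℤ :=
  F n + F (n - 1) + F (n - 2) + F (n - s) - n

theorem cumExcess_succ (s : ℤ) (F : ℤ → ℤ) (n : ℤ) :
    cumExcess s F (n + 1) = cumExcess s F n + excess s F n := by
  simp only [cumExcess, excess, jump]
  ring_nf

/-- Surplus of the window of length `L` starting at `n` over `q`. -/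
def surplus (L q : ℤ) (F : ℤ → ℤ) (n : ℤ) : ℤ := F (n + L) - F n - q

theorem surplus_succ (L q : ℤ) (F : ℤ → ℤ) (n : ℤ) :
    surplus L q F (n + 1) = surplus L q F n + jump F (n + L) - jump F n := by
  simp only [surplus, jump]
  ring_nf

/-- What remains of the surplus at `n - t` after paying for the deficit at `n`. -/
def balance (t L q : ℤ) (F : ℤ → ℤ) (n : ℤ) : ℤ :=
  max (surplus L q F (n - t)) 0 - max (-surplus L q F n) 0

theorem window_loss (s q : ℤ) (F : ℤ → ℤ) (n : ℤ) :
    3 * surplus (s + 1) q F n + surplus (s + 1) q F (n - s) + 4 * q =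
      s - 1 + 2 * jump F n + jump F (n + 1) + jump F (n + s - 1) + 2 * jump F (n + s)
        + jump F (n - s) + jump F (n - s + 1)
        + (cumExcess s F (n + s + 1) - cumExcess s F (n + 2)) := by
  simp only [surplus, cumExcess, jump]
  ring_nf

theorem window_loss' (s q : ℤ) (F : ℤ → ℤ) (n : ℤ) :
    3 * surplus (s - 1) q F n + surplus (s - 1) q F (n - (s - 1)) + 4 * q =
      s - 3 + 2 * jump F n + jump F (n + 1) + jump F (n + s - 3) + 2 * jump F (n + s - 2)
        + jump F (n - s + 1) + jump F (n - 1)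
        + (cumExcess s F (n + s - 1) - cumExcess s F (n + 2)) := by
  simp only [surplus, cumExcess, jump]
  ring_nf

namespace IsCounting

variable {s : ℤ} {F : ℤ → ℤ}

theorem cumExcess_mono (h : IsCounting s F) : Monotone (cumExcess s F) :=
  monotone_int_of_le_succ fun n => by
    have := cumExcess_succ s F n
    have := h.excess_nonneg n
    omega

theorem excess_le (h : IsCounting s F) {a b i : ℤ} (ha : a ≤ i) (hb : i < b) :
    excess s F i ≤ cumExcess s F b - cumExcess s F a := by
  have h1 := h.cumExcess_mono ha
  have h2 := h.cumExcess_mono (show i + 1 ≤ b by omega)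
  have := cumExcess_succ s F i
  omega

theorem balance_nonneg_of_four_mul {k : ℤ} (h : IsCounting (4 * k) F) (hk : 1 ≤ k) (n : ℤ) :
    0 ≤ balance (4 * k - 1) (4 * k - 1) k F n := by
  have hl := window_loss' (4 * k) k F n
  have hG := h.cumExcess_mono (show n + 2 ≤ n + 4 * k - 1 by omega)
  have e1 := h.excess_nonneg (n + 1)
  have hj := h.jump_nonneg
  have j1 := hj n
  have j2 := hj (n + 1)
  have j3 := hj (n + 4 * k - 3)
  have j4 := hj (n + 4 * k - 2)
  have j5 := hj (n - 4 * k + 1)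
  have j6 := hj (n - 1)
  unfold excess at e1
  rw [show n + 1 - 1 = n by ring, show n + 1 - 2 = n - 1 by ring,
    show n + 1 - 4 * k = n - 4 * k + 1 by ring] at e1
  unfold balance
  omega

theorem balance_nonneg_of_four_mul_add_two {k : ℤ} (h : IsCounting (4 * k + 2) F) (hk : 1 ≤ k)
    (n : ℤ) : 0 ≤ balance (4 * k + 2) (4 * k + 2 + 1) (k + 1) F n := by
  obtain ⟨s, hs⟩ : ∃ s, s = 4 * k + 2 := ⟨_, rfl⟩
  rw [← hs] at h ⊢
  have hl := window_loss s (k + 1) F n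
  have hG := h.cumExcess_mono (show n + 2 ≤ n + s - 1 by omega)
  have hG1 := cumExcess_succ s F (n + s - 1)
  have hG2 := cumExcess_succ s F (n + s)
  have e0 := h.excess_nonneg n
  have e1 := h.excess_nonneg (n + 1)
  have e2 := h.excess_nonneg (n + s - 1)
  have e3 := h.excess_nonneg (n + s)
  have hj := h.jump_nonneg
  have j1 := hj n
  have j2 := hj (n + 1)
  have j3 := hj (n + s - 1)
  have j4 := hj (n + s)
  have j5 := hj (n - s)
  have j6 := hj (n - s + 1)
  have j7 := hj (n + s - 2)
  have j8 := hj (n + s - 3)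
  rw [show n + s - 1 + 1 = n + s by ring] at hG1
  unfold excess at *
  rw [show n + 1 - 1 = n by ring, show n + 1 - 2 = n - 1 by ring,
    show n + 1 - s = n - s + 1 by ring] at e1
  rw [show n + s - 1 - 1 = n + s - 2 by ring, show n + s - 1 - 2 = n + s - 3 by ring,
    show n + s - 1 - s = n - 1 by ring] at e2 hG1
  rw [show n + s - s = n by ring] at e3 hG2
  unfold balance
  omega

/-- The data forced by a negative balance when `s = 4k + 1`. -/
theorem of_balance_neg {k : ℤ} (h : IsCounting s F) (hs : s = 4 * k + 1) (hk : 1 ≤ k)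
    {n : ℤ} (hn : balance s (s + 1) (k + 1) F n < 0) :
    balance s (s + 1) (k + 1) F n = -1 ∧
    surplus (s + 1) (k + 1) F n = -1 ∧ surplus (s + 1) (k + 1) F (n - s) = 0 ∧
    jump F n = 0 ∧ jump F (n + 1) = 0 ∧ jump F (n - 1) = 1 ∧ jump F (n + s - 2) = 1 ∧
    jump F (n + s - 1) = 0 ∧ jump F (n + s) = 0 ∧ jump F (n - s) = 0 ∧
    jump F (n - s + 1) = 0 ∧
    ∀ i, n + 2 ≤ i → i ≤ n + s → i ≠ n + s - 1 → excess s F i = 0 := by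
  have hl := window_loss s (k + 1) F n
  have hG := h.cumExcess_mono (show n + 2 ≤ n + s - 2 by omega)
  have hG0 := cumExcess_succ s F (n + s - 2)
  have hG1 := cumExcess_succ s F (n + s - 1)
  have hG2 := cumExcess_succ s F (n + s)
  have e0 := h.excess_nonneg n
  have e1 := h.excess_nonneg (n + 1)
  have e2 := h.excess_nonneg (n + s - 1)
  have e3 := h.excess_nonneg (n + s)
  have e4 := h.excess_nonneg (n + s - 2)
  have hj := h.jump_nonneg
  have hj' := h.jump_le_one
  have j1 := hj n
  have j2 := hj (n + 1)
  have j3 := hj (n + s - 1)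
  have j4 := hj (n + s)
  have j5 := hj (n - s)
  have j6 := hj (n - s + 1)
  have j7 := hj (n + s - 2)
  have j8 := hj (n + s - 3)
  have j11 := hj (n + s - 4)
  have j9 := hj' (n + s - 2)
  have j10 := hj' (n - 1)
  have e0d := excess_eq s F n
  have e1d := excess_eq s F (n + 1)
  have e2d := excess_eq s F (n + s - 1)
  have e3d := excess_eq s F (n + s)
  have e4d := excess_eq s F (n + s - 2)
  rw [show n + s - 2 + 1 = n + s - 1 by ring] at hG0
  rw [show n + s - 2 - 1 = n + s - 3 by ring, show n + s - 2 - 2 = n + s - 4 by ring,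
    show n + s - 2 - s = n - 2 by ring] at e4d
  rw [show n + s - 1 + 1 = n + s by ring] at hG1
  rw [show n + 1 - 1 = n by ring, show n + 1 - 2 = n - 1 by ring,
    show n + 1 - s = n - s + 1 by ring] at e1d
  rw [show n + s - 1 - 1 = n + s - 2 by ring, show n + s - 1 - 2 = n + s - 3 by ring,
    show n + s - 1 - s = n - 1 by ring] at e2d
  rw [show n + s - s = n by ring] at e3d
  unfold balance at *
  have key : cumExcess s F (n + s + 1) - cumExcess s F (n + 2) ≤ excess s F (n + s - 1) := by
    omega
  refine ⟨by omega, by omega, by omega, by omega, by omega, by omega, by omega, by omega,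
    by omega, by omega, by omega, fun i h1 h2 h3 => ?_⟩
  have := h.excess_nonneg i
  rcases lt_or_ge i (n + s - 1) with h4 | h4
  · have := h.excess_le h1 h4
    omega
  · obtain rfl : i = n + s := by omega
    omega

/-- Distances in `D` exceed `2` on a stretch after a negative balance where the surplus vanishes. -/
theorem jump_eq_zero_of_surplus_eq_zero {k : ℤ} (h : IsCounting s F) (hs : s = 4 * k + 1)
    (hk : 1 ≤ k) {n M : ℤ} (hn : balance s (s + 1) (k + 1) F n < 0) (hn2 : jump F (n + 2) = 0)
    (hM : ∀ m, n < m → m < M → surplus (s + 1) (k + 1) F m = 0) {i d : ℤ} (hi : n + 1 ≤ i)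
    (hd : d = 1 ∨ d = 2) (hiM : i + d < M + s) (hx : jump F i = 1) : jump F (i + d) = 0 := by
  obtain ⟨-, -, -, x0, x1, -, -, xs1, xs, -, -, he⟩ := h.of_balance_neg hs hk hn
  have per : ∀ i, n + 1 ≤ i → i + 2 ≤ M → jump F (i + (s + 1)) = jump F i := fun i h1 h2 => by
    have := hM i (by omega) (by omega)
    have h3 := hM (i + 1) (by omega) (by omega)
    rw [surplus_succ] at h3
    omega
  obtain ⟨N, hN⟩ : ∃ N : ℕ, i ≤ n + N := ⟨(i - n).toNat, by omega⟩
  induction N using Nat.strong_induction_on generalizing i with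
  | _ N ih =>
  have j0 := h.jump_nonneg
  have j1 := h.jump_le_one (i + d)
  have j2 := j0 (i + d)
  rcases le_or_gt (i + d) (n + s) with h1 | h1
  · by_contra h0
    have hne : i + d ≠ n + s - 1 := fun h2 => h0 (h2 ▸ xs1)
    have := he (i + d) (by omega) h1 hne
    unfold excess at this
    have := j0 (i + d - s)
    have := j0 (i + d - 1)
    have := j0 (i + d - 2)
    rcases hd with rfl | rfl
    · rw [show i + 1 - 1 = i by ring] at *
      omega
    · rw [show i + 2 - 2 = i by ring] at *
      omega
  · obtain rfl | rfl | rfl | h2 :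
        i = n + s - 1 ∨ i = n + s ∨ i = n + s + 1 ∨ n + s + 2 ≤ i := by omega
    · omega
    · omega
    · have := per (n + d) (by omega) (by omega)
      rw [show n + d + (s + 1) = n + s + 1 + d by ring] at this
      rcases hd with rfl | rfl <;> omega
    · have p1 := per (i - (s + 1)) (by omega) (by omega)
      have p2 := per (i - (s + 1) + d) (by omega) (by omega)
      rw [show i - (s + 1) + (s + 1) = i by ring] at p1
      rw [show i - (s + 1) + d + (s + 1) = i + d by ring] at p2
      rw [p2]
      exact ih (N - (s + 1).toNat) (by omega) (i := i - (s + 1)) (by omega) (by omega)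
        (by omega) (by omega)

/-- Between two negative balances the balance is somewhere nonzero. -/
theorem exists_balance_ne_zero {k : ℤ} (h : IsCounting s F) (hs : s = 4 * k + 1) (hk : 1 ≤ k)
    {n n' : ℤ} (hlt : n < n') (hn : balance s (s + 1) (k + 1) F n < 0)
    (hn' : balance s (s + 1) (k + 1) F n' < 0) :
    ∃ m, n < m ∧ m < n' ∧ balance s (s + 1) (k + 1) F m ≠ 0 := by
  by_contra! hz
  obtain ⟨-, f0, fs, x0, x1, -, -, xs1, xs, x2, x3, -⟩ := h.of_balance_neg hs hk hn
  obtain ⟨-, f0', -, -, -, y1, y2, ys1, -⟩ := h.of_balance_neg hs hk hn'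
  have j0 := h.jump_nonneg
  have j1 := h.jump_le_one
  set f := surplus (s + 1) (k + 1) F with hf
  have step : ∀ m, f (m + 1) = f m + jump F (m + (s + 1)) - jump F m := surplus_succ _ _ _
  have bal : ∀ m, balance s (s + 1) (k + 1) F m = max (f (m - s)) 0 - max (-f m) 0 :=
    fun _ => rfl
  have x4 : jump F (n + (s + 1)) = 1 := by
    have := h.excess_nonneg (n + (s + 1))
    rw [excess_eq, show n + (s + 1) - 1 = n + s by ring, show n + (s + 1) - 2 = n + s - 1 by ring,
      show n + (s + 1) - s = n + 1 by ring] at this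
    have := j1 (n + (s + 1))
    omega
  have f1 := step n
  have f2 := step (n + 1)
  rw [show n + 1 + 1 = n + 2 by ring] at f2
  have j2 := j0 (n + 1 + (s + 1))
  have hn2 : n + 2 < n' := by
    by_contra hc
    obtain rfl | rfl : n' = n + 1 ∨ n' = n + 2 := by omega
    · omega
    · omega
  have x5 : jump F (n + 2) = 0 := by
    have h1 := hz (n + 2) (by omega) hn2
    rw [bal] at h1
    have g1 := step (n - s)
    have g2 := step (n - s + 1)
    rw [show n - s + (s + 1) = n + 1 by ring] at g1
    rw [show n - s + 1 + (s + 1) = n + 2 by ring, show n - s + 1 + 1 = n + 2 - s by ring] at g2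
    have := j0 (n + 2)
    omega
  obtain ⟨p, ⟨hp1, hp2⟩, hp3⟩ := Int.exists_least_of_bdd (P := fun z => n < z ∧ f z < 0)
    ⟨n, fun z hz => hz.1.le⟩ ⟨n', hlt, by omega⟩
  obtain ⟨M, ⟨hM1, hM2⟩, hM3⟩ := Int.exists_least_of_bdd (P := fun z => n < z ∧ f z ≠ 0)
    ⟨n, fun z hz => hz.1.le⟩ ⟨p, hp1, by omega⟩
  have hpn : p ≤ n' := hp3 n' ⟨hlt, by omega⟩
  have hpos : ∀ z, n < z → z < p → 0 ≤ f z := fun z h1 h2 => by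
    by_contra h3
    have := hp3 z ⟨h1, by omega⟩
    omega
  have hzero : ∀ z, n < z → z < M → f z = 0 := fun z h1 h2 => by
    by_contra h3
    have := hM3 z ⟨h1, h3⟩
    omega
  have hMp : M ≤ p := hM3 p ⟨hp1, by omega⟩
  have hpM : p ≤ M + s := by
    by_contra hc
    have h1 := hz (M + s) (by omega) (by omega)
    have h2 := hpos M hM1 (by omega)
    have h3 := hpos (M + s) (by omega) (by omega)
    rw [bal, show M + s - s = M by ring] at h1
    omega
  have close : ∀ i d, n + 1 ≤ i → (d = 1 ∨ d = 2) → i + d < M + s → jump F i = 1 →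
      jump F (i + d) = 0 :=
    fun i d h1 h2 h3 => h.jump_eq_zero_of_surplus_eq_zero hs hk hn x5 hzero h1 h2 h3
  have hp4 : n + 3 ≤ p := by
    by_contra hc
    obtain rfl | rfl : p = n + 1 ∨ p = n + 2 := by omega
    · omega
    · omega
  have q1 := step (p - 1)
  have q2 := hpos (p - 1) (by omega) (by omega)
  have q3 := j1 (p - 1)
  have q4 := j0 (p - 1 + (s + 1))
  rw [show p - 1 + 1 = p by ring] at q1
  rcases eq_or_lt_of_le hpn with rfl | hpn
  · have r1 := step (p - 2)
    have r2 := step (p - 3)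
    rw [show p - 2 + 1 = p - 1 by ring, show p - 2 + (s + 1) = p + s - 1 by ring] at r1
    rw [show p - 3 + 1 = p - 2 by ring, show p - 3 + (s + 1) = p + s - 2 by ring] at r2
    have hp5 : n + 4 ≤ p := by
      by_contra hc
      obtain rfl : p = n + 3 := by omega
      rw [show n + 3 - 1 = n + 2 by ring] at y1
      omega
    have r3 := hpos (p - 3) (by omega) (by omega)
    have r4 := close (p - 2) 1 (by omega) (by omega) (by omega)
    have r5 := close (p - 3) 2 (by omega) (by omega) (by omega)
    rw [show p - 2 + 1 = p - 1 by ring] at r4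
    rw [show p - 3 + 2 = p - 1 by ring] at r5
    have := j0 (p - 2)
    have := j0 (p - 3)
    have := j1 (p - 2)
    have := j1 (p - 3)
    omega
  have hb := hz p hp1 hpn
  have hb' := hz (p - 1) (by omega) (by omega)
  rw [bal] at hb hb'
  have hxp : jump F p = 1 := by
    have r1 := step (p - 1 - s)
    rw [show p - 1 - s + 1 = p - s by ring, show p - 1 - s + (s + 1) = p by ring] at r1
    have := j0 (p - 1 - s)
    have := j0 p
    have := j1 p
    have := j1 (p - 1 - s)
    omega
  have hpe : p = M + s := by
    by_contra hc
    have := close (p - 1) 1 (by omega) (by omega) (by omega) (by omega)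
    rw [show p - 1 + 1 = p by ring] at this
    omega
  have hl := window_loss s (k + 1) F p
  have hfM : f (p - s) = 1 := by omega
  have := j0 (p + 1)
  have := j0 (p + s - 1)
  have := j0 (p + s)
  have := j0 (p - s)
  have := j0 (p - s + 1)
  have hG := h.cumExcess_mono (show p + 2 ≤ p + s + 1 by omega)
  rw [← hf] at hl
  have he : ∀ i, p + 2 ≤ i → i ≤ p + s → excess s F i = 0 := fun i h1 h2 => by
    have := h.excess_le h1 (show i < p + s + 1 by omega)
    have := h.excess_nonneg i
    omega
  subst hpe
  rw [show M + s - s = M by ring] at *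
  have z3 : jump F (M + 2) = 0 := by
    have := he (M + s + 2) (by omega) (by omega)
    rw [excess_eq, show M + s + 2 - 2 = M + s by ring, show M + s + 2 - s = M + 2 by ring] at this
    have := j0 (M + s + 2)
    have := j0 (M + s + 2 - 1)
    have := j0 (M + 2)
    omega
  have four : ∀ i, M + 3 ≤ i → i + 4 ≤ M + s → F (i + 4) ≤ F i + 1 := fun i h1 h2 => by
    have c1 := close i 1 (by omega) (by omega) (by omega)
    have c2 := close i 2 (by omega) (by omega) (by omega)
    have c3 := close (i + 1) 1 (by omega) (by omega) (by omega)
    have c4 := close (i + 1) 2 (by omega) (by omega) (by omega)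
    have c5 := close (i + 2) 1 (by omega) (by omega) (by omega)
    rw [show i + 1 + 1 = i + 2 by ring] at c3
    rw [show i + 1 + 2 = i + 3 by ring] at c4
    rw [show i + 2 + 1 = i + 3 by ring] at c5
    have e1 := he (i + s) (by omega) (by omega)
    have e2 := he (i + s + 1) (by omega) (by omega)
    have e3 := he (i + s + 3) (by omega) (by omega)
    rw [excess_eq, show i + s - s = i by ring] at e1
    rw [excess_eq, show i + s + 1 - 1 = i + s by ring, show i + s + 1 - 2 = i + s - 1 by ring,
      show i + s + 1 - s = i + 1 by ring] at e2
    rw [excess_eq, show i + s + 3 - 1 = i + s + 2 by ring, show i + s + 3 - 2 = i + s + 1 by ring,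
      show i + s + 3 - s = i + 3 by ring] at e3
    have hsum : F (i + 4) = F i + jump F i + jump F (i + 1) + jump F (i + 2) + jump F (i + 3) := by
      simp only [jump]
      ring_nf
    have := j0 i
    have := j0 (i + 1)
    have := j0 (i + 2)
    have := j0 (i + 3)
    have := j1 i
    have := j1 (i + 1)
    have := j1 (i + 2)
    have := j1 (i + 3)
    have := j0 (i + s - 1)
    have := j0 (i + s)
    have := j0 (i + s - 2)
    have := j0 (i + s + 1)
    have := j0 (i + s + 2)
    have := j0 (i + s + 3)
    omega
  have many : ∀ j : ℕ, (j : ℤ) ≤ k - 1 → F (M + 3 + 4 * j) ≤ F (M + 3) + j := fun j => by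
    induction j with
    | zero => simp
    | succ j ih =>
      intro hj
      push_cast at hj ⊢
      have := ih (by omega)
      have := four (M + 3 + 4 * j) (by omega) (by omega)
      rw [show M + 3 + 4 * ((j : ℤ) + 1) = M + 3 + 4 * j + 4 by ring]
      omega
  have hk1 := many (k - 1).toNat (by omega)
  rw [show M + 3 + 4 * ((k - 1).toNat : ℤ) = M + s - 2 by omega] at hk1
  have c := close (M + s - 2) 1 (by omega) (by omega) (by omega)
  rw [show M + s - 2 + 1 = M + s - 1 by ring] at c
  have t1 : F (M + s) = F (M + s - 2) + jump F (M + s - 2) + jump F (M + s - 1) := by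
    simp only [jump]
    ring_nf
  have t2 : F (M + 3) = F M + jump F M + jump F (M + 1) + jump F (M + 2) := by
    simp only [jump]
    ring_nf
  have t3 : f M = F (M + s) + jump F (M + s) - F M - (k + 1) := by
    simp only [hf, surplus, jump]
    ring_nf
  have := j0 (M + s - 2)
  have := j1 (M + s - 2)
  have := j1 (M + s - 1)
  omega

end IsCounting

theorem neg_one_le_sum_range {φ : ℤ → ℤ} (h1 : ∀ n, -1 ≤ φ n)
    (h2 : ∀ n n', n < n' → φ n < 0 → φ n' < 0 → ∃ m, n < m ∧ m < n' ∧ φ m ≠ 0)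
    (a : ℤ) (N : ℕ) : -1 ≤ ∑ i ∈ Finset.range N, φ (a + i) := by
  suffices -1 ≤ ∑ i ∈ Finset.range N, φ (a + i) ∧ (∑ i ∈ Finset.range N, φ (a + i) = -1 →
      ∃ n < a + N, φ n < 0 ∧ ∀ m, n < m → m < a + N → φ m = 0) from this.1
  induction N with
  | zero => simp
  | succ N ih =>
    obtain ⟨ih1, ih2⟩ := ih
    rw [Finset.sum_range_succ]
    push_cast
    have hN := h1 (a + N)
    rcases lt_trichotomy (φ (a + N)) 0 with hneg | hzero | hpos
    · have hS : ∑ i ∈ Finset.range N, φ (a + i) ≠ -1 := fun hS => by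
        obtain ⟨n, hn, hφ, hgap⟩ := ih2 hS
        obtain ⟨m, hm1, hm2, hm⟩ := h2 n _ hn hφ hneg
        exact hm (hgap m hm1 hm2)
      exact ⟨by omega, fun _ => ⟨a + N, by omega, hneg, fun m _ _ => by omega⟩⟩
    · refine ⟨by omega, fun hS => ?_⟩
      obtain ⟨n, hn, hφ, hgap⟩ := ih2 (by omega)
      refine ⟨n, by omega, hφ, fun m hm1 hm2 => ?_⟩
      rcases eq_or_ne m (a + N) with rfl | hm
      · exact hzero
      · exact hgap m hm1 (by omega)
    · exact ⟨by omega, by omega⟩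

theorem sum_range_shift_sub (G : ℤ → ℤ) (a : ℤ) (N L : ℕ) :
    ∑ i ∈ Finset.range N, (G (a + i + L) - G (a + i)) =
      ∑ i ∈ Finset.range L, (G (a + N + i) - G (a + i)) := by
  induction N with
  | zero => simp
  | succ N ih =>
    have h := Finset.sum_range_sub (fun i : ℕ => G (a + N + i)) L
    rw [Finset.sum_range_succ, ih]
    push_cast at h ⊢
    rw [add_zero] at h
    rw [← h, ← Finset.sum_add_distrib]
    refine Finset.sum_congr rfl fun i _ => ?_
    ring_nf

namespace IsCounting

variable {s : ℤ} {F : ℤ → ℤ}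

theorem monotone (h : IsCounting s F) : Monotone F :=
  monotone_int_of_le_succ fun n => sub_nonneg.1 (h.jump_nonneg n)

theorem sub_le (h : IsCounting s F) (n : ℤ) (L : ℕ) : F (n + L) - F n ≤ L := by
  induction L with
  | zero => simp
  | succ L ih =>
    have := h.jump_le_one (n + L)
    rw [jump] at this
    push_cast
    rw [← add_assoc]
    omega

/-- A balance that is bounded below on average bounds the density of `F` by `q / L`. -/
theorem mul_le_of_balance (h : IsCounting s F) {t L : ℕ} {q : ℤ} (hq : 0 ≤ q)
    (h1 : ∀ n, -1 ≤ balance t L q F n)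
    (h2 : ∀ n n', n < n' → balance t L q F n < 0 → balance t L q F n' < 0 →
      ∃ m, n < m ∧ m < n' ∧ balance t L q F m ≠ 0) (a : ℤ) (M : ℕ) :
    q * M ≤ L * (F (a + M) - F a) + (1 + t * L + q * L) := by
  rcases lt_or_ge M L with hM | hM
  · have h3 : F a ≤ F (a + M) := h.monotone (by omega)
    have h4 : q * M ≤ q * L := by gcongr
    have h5 : 0 ≤ L * (F (a + M) - F a) := mul_nonneg (by omega) (by omega)
    have h6 : (0 : ℤ) ≤ t * L := by positivity
    omega
  obtain ⟨N, rfl⟩ := Nat.exists_eq_add_of_le' hM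
  have hφ := neg_one_le_sum_range h1 h2 a N
  have hsurplus : ∑ i ∈ Finset.range N, surplus L q F (a + i) =
      ∑ i ∈ Finset.range N, balance t L q F (a + i) + ∑ i ∈ Finset.range t,
        (max (surplus L q F (a - t + N + i)) 0 - max (surplus L q F (a - t + i)) 0) := by
    rw [← sum_range_shift_sub (fun n => max (surplus L q F n) 0), ← Finset.sum_add_distrib]
    refine Finset.sum_congr rfl fun i _ => ?_
    rw [balance, show a - t + i + t = a + (i : ℤ) by ring, show a + i - t = a - t + (i : ℤ) by ring]
    omega
  have hpos : ∑ _i ∈ Finset.range t, -(L : ℤ) ≤ ∑ i ∈ Finset.range t,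
      (max (surplus L q F (a - t + N + i)) 0 - max (surplus L q F (a - t + i)) 0) := by
    refine Finset.sum_le_sum fun i _ => ?_
    have := h.sub_le (a - t + i) L
    simp only [surplus]
    omega
  have hwindow : ∑ i ∈ Finset.range N, surplus L q F (a + i) =
      ∑ i ∈ Finset.range L, (F (a + N + i) - F (a + i)) - N * q := by
    rw [← sum_range_shift_sub]
    simp [surplus, Finset.sum_sub_distrib]
  have htotal : ∑ i ∈ Finset.range L, (F (a + N + i) - F (a + i)) ≤
      ∑ _i ∈ Finset.range L, (F (a + (N + L : ℕ)) - F a) := by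
    refine Finset.sum_le_sum fun i hi => ?_
    have hi := Finset.mem_range.1 hi
    exact sub_le_sub (h.monotone (by omega)) (h.monotone (by omega))
  simp only [Finset.sum_const, Finset.card_range, nsmul_eq_mul] at hpos htotal
  push_cast at htotal ⊢
  linarith

end IsCounting

theorem tendsto_add_div_two_mul_add_one (v C : ℝ) :
    Tendsto (fun n : ℕ => v + C / (2 * (n : ℝ) + 1)) atTop (nhds v) := by
  have h : Tendsto (fun n : ℕ => 2 * (n : ℝ) + 1) atTop atTop :=
    tendsto_atTop_add_const_right _ _
      (tendsto_natCast_atTop_atTop.const_mul_atTop two_pos)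
  simpa using tendsto_const_nhds.add (h.const_div_atTop C)

theorem ncard_inter_Icc_div_le_one (D : Set ℤ) (n : ℕ) :
    ((D ∩ Set.Icc (-(n : ℤ)) n).ncard : ℝ) / (2 * (n : ℝ) + 1) ≤ 1 := by
  rw [div_le_one (by positivity)]
  have h := Set.ncard_le_ncard (Set.inter_subset_right (s := D)) (Set.finite_Icc (-(n : ℤ)) n)
  rw [← Finset.coe_Icc, Set.ncard_coe_finset, Int.card_Icc] at h
  have h' : (D ∩ (Finset.Icc (-(n : ℤ)) n : Set ℤ)).ncard ≤ 2 * n + 1 := by omega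
  rw [Finset.coe_Icc] at h'
  exact_mod_cast h'

theorem le_lowerDensity {D : Set ℤ} {v C : ℝ}
    (h : ∀ n : ℕ, v * (2 * (n : ℝ) + 1) ≤ (D ∩ Set.Icc (-(n : ℤ)) n).ncard + C) :
    v ≤ lowerDensity D := by
  rw [← (tendsto_add_div_two_mul_add_one v (-C)).liminf_eq]
  refine liminf_le_liminf (Eventually.of_forall fun n => ?_)
    (tendsto_add_div_two_mul_add_one v (-C)).isBoundedUnder_ge
    (isBoundedUnder_of ⟨1, ncard_inter_Icc_div_le_one D⟩).isCoboundedUnder_ge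
  have hn : 0 < 2 * (n : ℝ) + 1 := by positivity
  rw [le_div_iff₀ hn, add_mul, div_mul_cancel₀ _ hn.ne']
  linarith [h n]

theorem lowerDensity_le {D : Set ℤ} {v C : ℝ}
    (h : ∀ n : ℕ, ((D ∩ Set.Icc (-(n : ℤ)) n).ncard : ℝ) ≤ v * (2 * (n : ℝ) + 1) + C) :
    lowerDensity D ≤ v := by
  rw [← (tendsto_add_div_two_mul_add_one v C).liminf_eq]
  refine liminf_le_liminf (Eventually.of_forall fun n => ?_)
    (isBoundedUnder_of ⟨0, fun n => by positivity⟩)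
    (tendsto_add_div_two_mul_add_one v C).isBoundedUnder_le.isCoboundedUnder_ge
  have hn : 0 < 2 * (n : ℝ) + 1 := by positivity
  rw [div_le_iff₀ hn, add_mul, div_mul_cancel₀ _ hn.ne']
  exact h n

theorem exists_sub_eq (g : ℤ → ℤ) : ∃ F : ℤ → ℤ, ∀ n, F (n + 1) - F n = g n := by
  refine ⟨fun n => Int.inductionOn' (motive := fun _ => ℤ) n 0 0 (fun m _ x => x + g m)
    (fun m _ x => x - g (m - 1)), fun n => ?_⟩
  rcases le_or_gt 0 n with hn | hn
  · simp [Int.inductionOn'_add_one hn]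
  · have h := Int.inductionOn'_sub_one (motive := fun _ => ℤ) (zero := 0)
      (succ := fun m _ x => x + g m) (pred := fun m _ x => x - g (m - 1))
      (show n + 1 ≤ 0 by omega)
    rw [add_sub_cancel_right] at h
    simp [h]

theorem ncard_inter_Ico {D : Set ℤ} {F : ℤ → ℤ} (hmem : ∀ n ∈ D, jump F n = 1)
    (hnot : ∀ n ∉ D, jump F n = 0) (a : ℤ) (N : ℕ) :
    ((D ∩ Set.Ico a (a + N)).ncard : ℤ) = F (a + N) - F a := by
  induction N with
  | zero => simp
  | succ N ih =>
    have hIco : Set.Ico a (a + (N + 1 : ℕ)) = insert (a + (N : ℤ)) (Set.Ico a (a + N)) := by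
      ext x
      simp only [Set.mem_Ico, Set.mem_insert_iff]
      omega
    rw [hIco]
    push_cast
    by_cases hD : a + (N : ℤ) ∈ D
    · have h1 := hmem _ hD
      rw [jump] at h1
      rw [Set.inter_insert_of_mem hD, Set.ncard_insert_of_notMem (by simp)
        ((Set.finite_Ico _ _).inter_of_right _)]
      push_cast
      rw [← add_assoc]
      omega
    · have h1 := hnot _ hD
      rw [jump] at h1
      rw [Set.inter_insert_of_notMem hD, ← add_assoc]
      omega

open Classical in
theorem exists_isCounting {s : ℤ} {D : Set ℤ} (hD : Dominating {1, 2, s} D) :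
    ∃ F, IsCounting s F ∧ ∀ n : ℕ, ((D ∩ Set.Icc (-(n : ℤ)) n).ncard : ℤ) =
      F (-n + (2 * n + 1 : ℕ)) - F (-n) := by
  obtain ⟨F, hF⟩ := exists_sub_eq fun n => if n ∈ D then 1 else 0
  have hjump : ∀ n, jump F n = if n ∈ D then 1 else 0 := hF
  have hmem : ∀ n ∈ D, jump F n = 1 := fun n hn => by rw [hjump, if_pos hn]
  have hnonneg : ∀ n, 0 ≤ jump F n := fun n => by rw [hjump]; split_ifs <;> simp
  refine ⟨F, ⟨hnonneg, fun n => by rw [hjump]; split_ifs <;> simp, fun n => ?_⟩, fun n => ?_⟩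
  · have h0 := hnonneg n
    have h1 := hnonneg (n - 1)
    have h2 := hnonneg (n - 2)
    have h3 := hnonneg (n - s)
    rw [excess]
    rcases hD n with hn | ⟨u, hu, t, rfl | rfl | rfl, rfl⟩
    · linarith [hmem _ hn]
    all_goals
      rw [add_sub_cancel_right] at *
      linarith [hmem _ hu]
  · rw [← ncard_inter_Ico hmem fun n hn => by rw [hjump, if_neg hn]]
    congr 3
    ext x
    simp only [Set.mem_Icc, Set.mem_Ico]
    omega

/-- If balances are bounded below on average, dominating sets have lower density at least
`q / L`. -/
theorem div_le_lowerDensity_of_balance {s : ℤ} {t L : ℕ} {q : ℤ} (hL : 0 < L) (hq : 0 ≤ q)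
    (h1 : ∀ F, IsCounting s F → ∀ n, -1 ≤ balance t L q F n)
    (h2 : ∀ F, IsCounting s F → ∀ n n', n < n' → balance t L q F n < 0 →
      balance t L q F n' < 0 → ∃ m, n < m ∧ m < n' ∧ balance t L q F m ≠ 0)
    {D : Set ℤ} (hD : Dominating {1, 2, s} D) : (q : ℝ) / L ≤ lowerDensity D := by
  obtain ⟨F, hF, hcard⟩ := exists_isCounting hD
  have hL' : (0 : ℝ) < L := by exact_mod_cast hL
  refine le_lowerDensity (C := (1 + t * L + q * L) / L) fun n => ?_
  have h := hF.mul_le_of_balance hq (h1 F hF) (h2 F hF) (-n) (2 * n + 1)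
  rw [← hcard] at h
  have h' : (q : ℝ) * (2 * n + 1) ≤ L * ((D ∩ Set.Icc (-(n : ℤ)) n).ncard : ℝ) +
      (1 + t * L + q * L) := by exact_mod_cast h
  rw [div_mul_eq_mul_div, div_le_iff₀ hL', add_mul, div_mul_cancel₀ _ hL'.ne']
  linarith

/-- The periodic set with period `N` and residues `R`. -/
def periodicSet (N : ℤ) (R : Finset ℤ) : Set ℤ := {m | ∃ r ∈ R, m ≡ r [ZMOD N]}

theorem lowerDensity_periodicSet_le {N : ℤ} (hN : 0 < N) (R : Finset ℤ) :
    lowerDensity (periodicSet N R) ≤ R.card / (N : ℝ) := by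
  refine lowerDensity_le (C := R.card) fun n => ?_
  have hN' : (0 : ℚ) < N := by exact_mod_cast hN
  have hsub : periodicSet N R ∩ Set.Icc (-(n : ℤ)) n ⊆
      (R.biUnion fun r => {x ∈ Finset.Ioc (-(n : ℤ) - 1) n | x ≡ r [ZMOD N]} : Finset ℤ) := by
    rintro x ⟨⟨r, hr, hx⟩, hx1, hx2⟩
    simp only [Finset.coe_biUnion, Set.mem_iUnion, Finset.mem_coe, Finset.mem_filter,
      Finset.mem_Ioc, exists_prop]
    exact ⟨r, hr, by omega, hx⟩
  have hcard : ∀ r, (({x ∈ Finset.Ioc (-(n : ℤ) - 1) n | x ≡ r [ZMOD N]}.card : ℤ) : ℚ) ≤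
      (2 * n + 1) / N + 1 := fun r => by
    rw [Int.Ioc_filter_modEq_card _ _ hN]
    push_cast
    refine max_le ?_ (by positivity)
    have h1 := Int.floor_le (((n : ℚ) - r) / N)
    have h2 := Int.lt_floor_add_one ((-(n : ℚ) - 1 - r) / N)
    have h3 : ((n : ℚ) - r) / N = (-(n : ℚ) - 1 - r) / N + (2 * n + 1) / N := by ring
    linarith
  have htotal : ((periodicSet N R ∩ Set.Icc (-(n : ℤ)) n).ncard : ℚ) ≤
      R.card * ((2 * n + 1) / N + 1) := by
    have h1 := Set.ncard_le_ncard hsub (Finset.finite_toSet _)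
    rw [Set.ncard_coe_finset] at h1
    have h2 := h1.trans Finset.card_biUnion_le
    calc _ ≤ ((∑ r ∈ R, {x ∈ Finset.Ioc (-(n : ℤ) - 1) n | x ≡ r [ZMOD N]}.card : ℕ) : ℚ) := by
          exact_mod_cast h2
      _ ≤ ∑ _r ∈ R, ((2 * n + 1) / N + 1 : ℚ) := by
          push_cast
          exact Finset.sum_le_sum fun r _ => by exact_mod_cast hcard r
      _ = _ := by simp [mul_add]
  have hreal : (((periodicSet N R ∩ Set.Icc (-(n : ℤ)) n).ncard : ℚ) : ℝ) ≤
      ((R.card * ((2 * n + 1) / N + 1) : ℚ) : ℝ) := by exact_mod_cast htotal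
  push_cast at hreal
  calc _ ≤ _ := hreal
    _ = _ := by ring

/-- A set of residues dominating `0, …, N - 1` gives a periodic dominating set. -/
theorem dominating_periodicSet {S : Set ℤ} {N : ℤ} (hN : 0 < N) {R : Finset ℤ}
    (h : ∀ m, 0 ≤ m → m < N → ∃ r ∈ R, ∃ t, (t = 0 ∨ t ∈ S) ∧ m ≡ r + t [ZMOD N]) :
    Dominating S (periodicSet N R) := fun m => by
  obtain ⟨r, hr, t, ht, hm⟩ := h (m % N) (Int.emod_nonneg _ hN.ne') (Int.emod_lt_of_pos _ hN)
  have hm' : m - t ≡ r [ZMOD N] := by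
    simpa using ((Int.mod_modEq m N).symm.trans hm).sub_right t
  rcases ht with rfl | ht
  · exact Or.inl ⟨r, hr, by simpa using hm'⟩
  · exact Or.inr ⟨m - t, ⟨r, hr, hm'⟩, t, ht, by ring⟩

theorem dominationRatio_eq {S : Set ℤ} {v : ℝ}
    (hlow : ∀ D, Dominating S D → v ≤ lowerDensity D)
    (hex : ∃ D, Dominating S D ∧ lowerDensity D ≤ v) : dominationRatio S = v := by
  obtain ⟨D, hD, hv⟩ := hex
  refine IsLeast.csInf_eq ⟨⟨D, hD, hv.antisymm (hlow D hD)⟩, ?_⟩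
  rintro _ ⟨E, hE, rfl⟩
  exact hlow E hE

theorem lowerDensity_neg (D : Set ℤ) : lowerDensity (Neg.neg '' D) = lowerDensity D := by
  have h : ∀ n : ℕ, Neg.neg '' D ∩ Set.Icc (-(n : ℤ)) n =
      Neg.neg '' (D ∩ Set.Icc (-(n : ℤ)) n) := fun n => by
    rw [Set.image_inter neg_injective]
    simp
  simp only [lowerDensity, h, Set.ncard_image_of_injective _ neg_injective]

theorem Dominating.neg_image {s : ℤ} {D : Set ℤ} (hD : Dominating {1, 2, s} D) :
    Dominating {1, 2, 2 - s} (Neg.neg '' D) := fun m => by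
  rcases hD (2 - m) with h | ⟨u, hu, t, ht, h⟩
  · exact Or.inr ⟨_, ⟨_, h, rfl⟩, 2, by simp, by ring⟩
  · rcases ht with rfl | rfl | rfl
    · exact Or.inr ⟨_, ⟨_, hu, rfl⟩, 1, by simp, by omega⟩
    · exact Or.inl ⟨_, hu, by omega⟩
    · exact Or.inr ⟨_, ⟨_, hu, rfl⟩, 2 - t, by simp, by omega⟩

theorem dominationRatio_two_sub (s : ℤ) :
    dominationRatio {1, 2, 2 - s} = dominationRatio {1, 2, s} := by
  have h : ∀ s : ℤ, lowerDensity '' {D | Dominating {1, 2, s} D} ⊆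
      lowerDensity '' {D | Dominating {1, 2, 2 - s} D} := by
    rintro s _ ⟨D, hD, rfl⟩
    exact ⟨_, hD.neg_image, lowerDensity_neg D⟩
  have h' := h (2 - s)
  rw [sub_sub_cancel] at h'
  exact congrArg sInf (h'.antisymm (h s))

theorem dominationRatio_four_mul {k : ℤ} (hk : 1 ≤ k) :
    dominationRatio {1, 2, 4 * k} = 2 * (k : ℝ) / (8 * (k : ℝ) - 2) := by
  have hk' : (1 : ℝ) ≤ k := by exact_mod_cast hk
  refine dominationRatio_eq (fun D hD => ?_) ?_
  · have hL : ((4 * k - 1).toNat : ℤ) = 4 * k - 1 := Int.toNat_of_nonneg (by omega)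
    have h := div_le_lowerDensity_of_balance (s := 4 * k) (t := (4 * k - 1).toNat)
      (L := (4 * k - 1).toNat) (q := k) (by omega) (by omega)
      (fun F hF n => by
        rw [hL]
        linarith [hF.balance_nonneg_of_four_mul hk n])
      (fun F hF n n' _ hn => by
        rw [hL] at hn
        exact absurd hn (hF.balance_nonneg_of_four_mul hk n).not_gt) hD
    have hL' : ((4 * k - 1).toNat : ℝ) = 4 * k - 1 := by
      exact_mod_cast congrArg (Int.cast (R := ℝ)) hL
    rw [hL'] at h
    convert h using 1
    rw [div_eq_div_iff (by linarith) (by linarith)]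
    ring
  · let R : Finset ℤ := (Finset.Ico 0 k).image (fun j => 1 + 4 * j) ∪
      (Finset.Ico 0 k).image (fun j => 4 * k + 2 + 4 * j)
    have hR1 : ∀ j, 0 ≤ j → j < k → 1 + 4 * j ∈ R := fun j h0 h1 =>
      Finset.mem_union_left _ (Finset.mem_image_of_mem _ (Finset.mem_Ico.2 ⟨h0, h1⟩))
    have hR2 : ∀ j, 0 ≤ j → j < k → 4 * k + 2 + 4 * j ∈ R := fun j h0 h1 =>
      Finset.mem_union_right _ (Finset.mem_image_of_mem (fun j => 4 * k + 2 + 4 * j)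
        (Finset.mem_Ico.2 ⟨h0, h1⟩))
    have hcard : (R.card : ℤ) ≤ 2 * k := by
      have h1 := Finset.card_union_le ((Finset.Ico 0 k).image (fun j => 1 + 4 * j))
        ((Finset.Ico 0 k).image (fun j => 4 * k + 2 + 4 * j))
      have h2 := Finset.card_image_le (s := Finset.Ico 0 k) (f := fun j => 1 + 4 * j)
      have h3 := Finset.card_image_le (s := Finset.Ico 0 k) (f := fun j => 4 * k + 2 + 4 * j)
      rw [Int.card_Ico] at h2 h3
      change (Finset.card (_ ∪ _) : ℤ) ≤ _
      omega
    refine ⟨_, dominating_periodicSet (N := 8 * k - 2) (by omega) (R := R) fun m h0 h1 => ?_,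
      (lowerDensity_periodicSet_le (by omega) R).trans ?_⟩
    · suffices h : ∃ r ∈ R, ∃ t, (t = 0 ∨ t ∈ ({1, 2, 4 * k} : Set ℤ)) ∧
          (r + t = m ∨ r + t = m + (8 * k - 2)) by
        obtain ⟨r, hr, t, ht, h | h⟩ := h
        · exact ⟨r, hr, t, ht, by rw [h]⟩
        · exact ⟨r, hr, t, ht, by rw [h]; simp⟩
      rcases eq_or_ne m 0 with rfl | hm
      · exact ⟨_, hR2 (k - 1) (by omega) (by omega), 0, by simp, by omega⟩
      have hmod : m % 4 = 0 ∨ m % 4 = 1 ∨ m % 4 = 2 ∨ m % 4 = 3 := by omega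
      rcases le_or_gt m (4 * k) with hmk | hmk
      · rcases hmod with h | h | h | h
        · exact ⟨_, hR2 (m / 4 - 1) (by omega) (by omega), 4 * k, by simp, by omega⟩
        · exact ⟨_, hR1 (m / 4) (by omega) (by omega), 0, by simp, by omega⟩
        · exact ⟨_, hR1 (m / 4) (by omega) (by omega), 1, by simp, by omega⟩
        · exact ⟨_, hR1 (m / 4) (by omega) (by omega), 2, by simp, by omega⟩
      · rcases hmod with h | h | h | h
        · exact ⟨_, hR2 (m / 4 - k - 1) (by omega) (by omega), 2, by simp, by omega⟩
        · exact ⟨_, hR1 (m / 4 - k) (by omega) (by omega), 4 * k, by simp, by omega⟩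
        · exact ⟨_, hR2 (m / 4 - k) (by omega) (by omega), 0, by simp, by omega⟩
        · exact ⟨_, hR2 (m / 4 - k) (by omega) (by omega), 1, by simp, by omega⟩
    · push_cast
      gcongr
      · linarith
      · exact_mod_cast hcard

/-- The residues `0, 4, …, 4 * k` dominate modulo `s + 1` as soon as `s ≤ 4 * k + 2`. -/
theorem exists_dominating_of_le {k s : ℤ} (hk : 1 ≤ k) (h1 : 4 * k + 1 ≤ s) (h2 : s ≤ 4 * k + 2) :
    ∃ D, Dominating {1, 2, s} D ∧ lowerDensity D ≤ ((k : ℝ) + 1) / (s + 1) := by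
  let R : Finset ℤ := (Finset.Ico 0 (k + 1)).image (fun j => 4 * j)
  have hR : ∀ j, 0 ≤ j → j ≤ k → 4 * j ∈ R := fun j h0 h1 =>
    Finset.mem_image_of_mem _ (Finset.mem_Ico.2 ⟨h0, by omega⟩)
  have hcard : (R.card : ℤ) ≤ k + 1 := by
    have h2 := Finset.card_image_le (s := Finset.Ico 0 (k + 1)) (f := fun j => 4 * j)
    rw [Int.card_Ico] at h2
    change (Finset.card (Finset.image _ _) : ℤ) ≤ _
    omega
  refine ⟨_, dominating_periodicSet (N := s + 1) (by omega) (R := R) fun m h0 h1 => ?_,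
    (lowerDensity_periodicSet_le (by omega) R).trans ?_⟩
  · have hmod : m % 4 = 0 ∨ m % 4 = 1 ∨ m % 4 = 2 ∨ m % 4 = 3 := by omega
    rcases hmod with h | h | h | h
    · exact ⟨_, hR (m / 4) (by omega) (by omega), 0, by simp,
        by rw [show 4 * (m / 4) + 0 = m by omega]⟩
    · exact ⟨_, hR (m / 4) (by omega) (by omega), 1, by simp,
        by rw [show 4 * (m / 4) + 1 = m by omega]⟩
    · exact ⟨_, hR (m / 4) (by omega) (by omega), 2, by simp,
        by rw [show 4 * (m / 4) + 2 = m by omega]⟩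
    · refine ⟨_, hR (m / 4 + 1) (by omega) (by omega), s, by simp, ?_⟩
      rw [show 4 * (m / 4 + 1) + s = m + (s + 1) by omega]
      simp
  · have hs : (0 : ℝ) < s + 1 := by exact_mod_cast (by omega : 0 < s + 1)
    push_cast
    gcongr
    exact_mod_cast hcard

theorem dominationRatio_four_mul_add_one {k : ℤ} (hk : 1 ≤ k) :
    dominationRatio {1, 2, 4 * k + 1} = ((k : ℝ) + 1) / (4 * (k : ℝ) + 2) := by
  refine dominationRatio_eq (fun D hD => ?_) ?_
  · have ht : ((4 * k + 1).toNat : ℤ) = 4 * k + 1 := Int.toNat_of_nonneg (by omega)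
    have h := div_le_lowerDensity_of_balance (s := 4 * k + 1) (t := (4 * k + 1).toNat)
      (L := (4 * k + 1).toNat + 1) (q := k + 1) (by omega) (by omega)
      (fun F hF n => by
        push_cast
        rw [ht]
        by_contra! hn
        linarith [(hF.of_balance_neg rfl hk (by linarith)).1])
      (fun F hF n n' hlt hn hn' => by
        push_cast at hn hn' ⊢
        rw [ht] at hn hn' ⊢
        exact hF.exists_balance_ne_zero rfl hk hlt hn hn') hD
    have ht' : ((4 * k + 1).toNat : ℝ) = 4 * k + 1 := by
      exact_mod_cast congrArg (Int.cast (R := ℝ)) ht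
    push_cast at h
    rw [ht', add_assoc] at h
    norm_num at h
    exact h
  · obtain ⟨D, hD, h⟩ := exists_dominating_of_le hk le_rfl (by omega)
    refine ⟨D, hD, h.trans_eq ?_⟩
    push_cast
    ring

theorem dominationRatio_four_mul_add_two {k : ℤ} (hk : 1 ≤ k) :
    dominationRatio {1, 2, 4 * k + 2} = ((k : ℝ) + 1) / (4 * (k : ℝ) + 3) := by
  refine dominationRatio_eq (fun D hD => ?_) ?_
  · have ht : ((4 * k + 2).toNat : ℤ) = 4 * k + 2 := Int.toNat_of_nonneg (by omega)
    have h := div_le_lowerDensity_of_balance (s := 4 * k + 2) (t := (4 * k + 2).toNat)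
      (L := (4 * k + 2).toNat + 1) (q := k + 1) (by omega) (by omega)
      (fun F hF n => by
        push_cast
        rw [ht]
        linarith [hF.balance_nonneg_of_four_mul_add_two hk n])
      (fun F hF n n' _ hn => by
        push_cast at hn
        rw [ht] at hn
        exact absurd hn (hF.balance_nonneg_of_four_mul_add_two hk n).not_gt) hD
    have ht' : ((4 * k + 2).toNat : ℝ) = 4 * k + 2 := by
      exact_mod_cast congrArg (Int.cast (R := ℝ)) ht
    push_cast at h
    rw [ht', add_assoc] at h
    norm_num at h
    exact h
  · obtain ⟨D, hD, h⟩ := exists_dominating_of_le hk (by omega) le_rfl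
    refine ⟨D, hD, h.trans_eq ?_⟩
    push_cast
    ring

theorem stmt_15 (k : ℤ) (hk : 1 ≤ k) :
    (∀ s : ℤ, (s = 4 * k ∨ s = -4 * k + 2) → s ∉ ({0, 1, 2} : Set ℤ) →
      dominationRatio {1, 2, s} = 2 * (k : ℝ) / (8 * (k : ℝ) - 2)) ∧
    (∀ s : ℤ, (s = 4 * k + 1 ∨ s = -4 * k + 1) →
      dominationRatio {1, 2, s} = ((k : ℝ) + 1) / (4 * (k : ℝ) + 2)) ∧
    (∀ s : ℤ, (s = 4 * k + 2 ∨ s = -4 * k) →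
      dominationRatio {1, 2, s} = ((k : ℝ) + 1) / (4 * (k : ℝ) + 3)) := by
  refine ⟨fun s hs _ => ?_, fun s hs => ?_, fun s hs => ?_⟩
  · rcases hs with rfl | rfl
    · exact dominationRatio_four_mul hk
    · rw [show -4 * k + 2 = 2 - 4 * k by ring, dominationRatio_two_sub]
      exact dominationRatio_four_mul hk
  · rcases hs with rfl | rfl
    · exact dominationRatio_four_mul_add_one hk
    · rw [show -4 * k + 1 = 2 - (4 * k + 1) by ring, dominationRatio_two_sub]
      exact dominationRatio_four_mul_add_one hk
  · rcases hs with rfl | rfl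
    · exact dominationRatio_four_mul_add_two hk
    · rw [show -4 * k = 2 - (4 * k + 2) by ring, dominationRatio_two_sub]
      exact dominationRatio_four_mul_add_two hk
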